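/- arXiv:alg-geom/9510009 — 2 statements merged into one kernel-verified Lean document; each statement's English description precedes it below -/
import Mathlib

section
/- Let n ≥ 1 and let Z ⊆ ℂⁿ be the set of common zeros of a family of polynomials in n variables all of whose coefficients are algebraic numbers. Then the set of points of Z all of whose coordinates are algebraic numbers is dense in Z with respect to the Euclidean topology. In particular, every point of Z that is not defined over the algebraic numbers is not isolated in Z, and admits points of Z with algebraic coordinates arbitrarily close to it. -/
open Filter Topology Polynomial in
theorem step_aux {R K : Type} [CommRing R] [Field K] [IsAlgClosed K] [Algebra K ℂ]
    (hd : DenseRange (algebraMap K ℂ))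
    (φ : R →+* ℂ) (ψ : ℕ → R →+* K)
    (h1 : ∀ r, Tendsto (fun k => algebraMap K ℂ (ψ k r)) atTop (𝓝 (φ r)))
    (h2 : ∀ r, φ r = 0 → ∀ᶠ k in atTop, ψ k r = 0) (α : ℂ) :
    ∃ y : ℕ → K, Tendsto (fun k => algebraMap K ℂ (y k)) atTop (𝓝 α) ∧
      ∀ Q : R[X], Q.eval₂ φ α = 0 → ∀ᶠ k in atTop, Q.eval₂ (ψ k) (y k) = 0 := by
  have hmap0 : ∀ Q : R[X], Q.map φ = 0 → ∀ᶠ k in atTop, Q.map (ψ k) = 0 := by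
    intro Q hQ
    have : ∀ᶠ k in atTop, ∀ i ∈ Q.support, ψ k (Q.coeff i) = 0 := by
      rw [Filter.eventually_all_finset]
      intro i _
      apply h2
      rw [← Polynomial.coeff_map, hQ, Polynomial.coeff_zero]
    filter_upwards [this] with k hk
    ext i
    rw [Polynomial.coeff_map, Polynomial.coeff_zero]
    by_cases hi : i ∈ Q.support
    · exact hk i hi
    · rw [Polynomial.notMem_support_iff.mp hi, map_zero]
  by_cases hex : ∃ d, ∃ F : R[X], F.natDegree = d ∧ φ (F.coeff d) ≠ 0 ∧ F.eval₂ φ α = 0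
  · classical
    obtain ⟨F, hFd, hFl, hF0⟩ := Nat.find_spec hex
    have hmin : ∀ m < Nat.find hex, _ := fun m hm => Nat.find_min hex hm
    generalize Nat.find hex = d at *
    -- minimality
    have hsmall : ∀ Q : R[X], (∀ i, d ≤ i → Q.coeff i = 0) → Q.eval₂ φ α = 0 →
        Q.map φ = 0 := by
      intro Q hQ hQ0
      by_contra hne
      have hl : Q.map φ ∈ Polynomial.lifts φ := (Polynomial.mem_lifts _).2 ⟨Q, rfl⟩
      obtain ⟨Q', hQ', hdeg⟩ := Polynomial.exists_natDegree_eq_of_mem_lifts hl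
      have hlt : Q'.natDegree < d := by
        rw [hdeg]
        by_contra hge
        push Not at hge
        apply hne
        rw [← Polynomial.leadingCoeff_eq_zero, Polynomial.leadingCoeff, Polynomial.coeff_map,
          hQ _ hge, map_zero]
      refine hmin _ hlt ⟨Q', rfl, ?_, ?_⟩
      · rw [← Polynomial.coeff_map, hQ', hdeg]
        exact fun h => hne (Polynomial.leadingCoeff_eq_zero.mp h)
      · rw [← Polynomial.eval_map, hQ', Polynomial.eval_map, hQ0]
    have hdpos : d ≠ 0 := by
      rintro rfl
      rw [Polynomial.eq_C_of_natDegree_eq_zero hFd, Polynomial.eval₂_C] at hF0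
      exact hFl hF0
    have hlk : ∀ᶠ k in atTop, ψ k (F.coeff d) ≠ 0 := by
      have := (h1 (F.coeff d)).eventually_ne hFl
      filter_upwards [this] with k hk h
      exact hk (by rw [h, map_zero])
    -- root near
    have hroot : ∀ k, ∃ y : K, ψ k (F.coeff d) ≠ 0 → (F.eval₂ (ψ k) y = 0 ∧
        ‖α - algebraMap K ℂ y‖ ^ d ≤
          ‖F.eval₂ ((algebraMap K ℂ).comp (ψ k)) α‖ / ‖algebraMap K ℂ (ψ k (F.coeff d))‖) := by
      intro k
      by_cases hk : ψ k (F.coeff d) = 0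
      · exact ⟨0, fun h => absurd hk h⟩
      set G := F.map (ψ k) with hG
      have hGd : G.natDegree = d := by
        apply le_antisymm
        · rw [← hFd]; exact Polynomial.natDegree_map_le
        · apply Polynomial.le_natDegree_of_ne_zero
          rwa [hG, Polynomial.coeff_map]
      have hGl : G.leadingCoeff = ψ k (F.coeff d) := by
        rw [Polynomial.leadingCoeff, hGd, hG, Polynomial.coeff_map]
      have hG0 : G ≠ 0 := by
        intro h
        rw [h, Polynomial.leadingCoeff_zero] at hGl
        exact hk hGl.symm
      have hs : G.Splits := IsAlgClosed.splits G
      have hcard : G.roots.card = d := by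
        rw [← hGd]; exact hs.natDegree_eq_card_roots.symm
      have hprod : F.eval₂ ((algebraMap K ℂ).comp (ψ k)) α =
          algebraMap K ℂ (ψ k (F.coeff d)) *
            (G.roots.map (fun a => α - algebraMap K ℂ a)).prod := by
        rw [← Polynomial.eval₂_map, ← hG]
        conv_lhs => rw [hs.eq_prod_roots]
        rw [Polynomial.eval₂_mul, Polynomial.eval₂_C, hGl]
        congr 1
        rw [← Polynomial.coe_eval₂RingHom, map_multiset_prod, Multiset.map_map]
        congr 1
        apply Multiset.map_congr rfl
        intro a _
        simp
      have hne : algebraMap K ℂ (ψ k (F.coeff d)) ≠ 0 := by simpa using hk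
      by_contra hcon
      push Not at hcon
      have hbig : ∀ a ∈ G.roots, ‖F.eval₂ ((algebraMap K ℂ).comp (ψ k)) α‖ /
          ‖algebraMap K ℂ (ψ k (F.coeff d))‖ < ‖α - algebraMap K ℂ a‖ ^ d := by
        intro a ha
        refine (hcon a).2 ?_
        rw [← Polynomial.eval_map]
        exact (Polynomial.mem_roots hG0).1 ha
      rw [hprod, norm_mul, mul_div_cancel_left₀ _ (norm_ne_zero_iff.2 hne)] at hbig
      have hrne : G.roots.toFinset.Nonempty := by
        rw [Multiset.toFinset_nonempty]
        intro h
        rw [h] at hcard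
        exact hdpos hcard.symm
      obtain ⟨a, ha, hamin⟩ := Finset.exists_min_image G.roots.toFinset
        (fun a => ‖α - algebraMap K ℂ a‖) hrne
      have hlt := hbig a (Multiset.mem_toFinset.1 ha)
      have hge : ‖α - algebraMap K ℂ a‖ ^ d ≤
          ‖(G.roots.map (fun a => α - algebraMap K ℂ a)).prod‖ := by
        have e : ‖(G.roots.map (fun a => α - algebraMap K ℂ a)).prod‖ =
            (G.roots.map (fun a => ‖α - algebraMap K ℂ a‖)).prod := by
          have := map_multiset_prod (normHom : ℂ →*₀ ℝ)
            (G.roots.map (fun a => α - algebraMap K ℂ a))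
          rw [Multiset.map_map] at this
          exact this
        rw [e]
        have := Multiset.prod_map_le_prod_map₀ (s := G.roots)
          (fun _ => ‖α - algebraMap K ℂ a‖)
          (fun b => ‖α - algebraMap K ℂ b‖) (fun _ _ => norm_nonneg _)
          (fun b hb => hamin b (Multiset.mem_toFinset.2 hb))
        rw [Multiset.map_const', Multiset.prod_replicate, hcard] at this
        exact this
      exact absurd hlt (not_lt.2 hge)
    choose y hy using hroot
    refine ⟨y, ?_, ?_⟩
    · have hev : Tendsto (fun k => F.eval₂ ((algebraMap K ℂ).comp (ψ k)) α) atTop (𝓝 0) := by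
        rw [← hF0]
        simp only [Polynomial.eval₂_eq_sum_range]
        apply tendsto_finsetSum
        intro i _
        exact (h1 _).mul_const _
      have hb : Tendsto (fun k => ‖F.eval₂ ((algebraMap K ℂ).comp (ψ k)) α‖ /
          ‖algebraMap K ℂ (ψ k (F.coeff d))‖) atTop (𝓝 0) := by
        have := hev.norm.div (h1 (F.coeff d)).norm (norm_ne_zero_iff.2 hFl)
        simp only [norm_zero, zero_div] at this
        exact this
      have hpow : Tendsto (fun k => ‖α - algebraMap K ℂ (y k)‖ ^ d) atTop (𝓝 0) := by
        apply tendsto_of_tendsto_of_tendsto_of_le_of_le' tendsto_const_nhds hb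
        · exact Eventually.of_forall fun k => by positivity
        · filter_upwards [hlk] with k hk
          exact (hy k hk).2
      rw [Metric.tendsto_atTop']
      intro ε hε
      have := hpow.eventually_lt_const (show (0:ℝ) < ε ^ d by positivity)
      obtain ⟨N, hN⟩ := eventually_atTop.1 this
      refine ⟨N, fun k hk => ?_⟩
      rw [dist_comm, dist_eq_norm]
      exact lt_of_pow_lt_pow_left₀ d hε.le (hN k hk.le)
    · have key : ∀ m, ∀ Q : R[X], (∀ i, m ≤ i → Q.coeff i = 0) → Q.eval₂ φ α = 0 →
          ∀ᶠ k in atTop, Q.eval₂ (ψ k) (y k) = 0 := by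
        intro m
        induction m with
        | zero =>
          intro Q hQ _
          have : Q = 0 := by ext i; simpa using hQ i (Nat.zero_le _)
          simp [this]
        | succ m ih =>
          intro Q hQ hQ0
          by_cases hmd : m < d
          · filter_upwards [hmap0 Q (hsmall Q (fun i hi => hQ i (by omega)) hQ0)] with k hk
            rw [← Polynomial.eval_map, hk, Polynomial.eval_zero]
          push Not at hmd
          have hc : ∀ i, m ≤ i → (C (F.coeff d) * Q - C (Q.coeff m) * (F * X ^ (m - d))).coeff i
              = 0 := by
            intro i hi
            rw [Polynomial.coeff_sub, Polynomial.coeff_C_mul, Polynomial.coeff_C_mul,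
              Polynomial.coeff_mul_X_pow', if_pos (by omega)]
            rcases hi.eq_or_lt with rfl | hlt
            · rw [Nat.sub_sub_self hmd]; ring
            · rw [hQ i hlt, Polynomial.coeff_eq_zero_of_natDegree_lt (p := F) (n := i - (m - d)) (by rw [hFd]; omega)]
              ring
          have := ih _ hc (by simp [Polynomial.eval₂_sub, Polynomial.eval₂_mul, hQ0, hF0])
          filter_upwards [this, hlk] with k hk hl
          rw [Polynomial.eval₂_sub, Polynomial.eval₂_mul, Polynomial.eval₂_mul,
            Polynomial.eval₂_mul, (hy k hl).1, Polynomial.eval₂_C] at hk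
          simpa [hl] using hk
      intro Q hQ
      exact key (Q.natDegree + 1) Q
        (fun i hi => Polynomial.coeff_eq_zero_of_natDegree_lt (by omega)) hQ
  · have hα : α ∈ closure (Set.range (algebraMap K ℂ)) := hd α
    obtain ⟨u, hu, hut⟩ := mem_closure_iff_seq_limit.1 hα
    choose y hy using hu
    refine ⟨y, by simpa [hy] using hut, ?_⟩
    intro Q hQ
    have hm : Q.map φ = 0 := by
      by_contra hne
      have hl : Q.map φ ∈ Polynomial.lifts φ := (Polynomial.mem_lifts _).2 ⟨Q, rfl⟩
      obtain ⟨Q', hQ', hdeg⟩ := Polynomial.exists_natDegree_eq_of_mem_lifts hl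
      refine hex ⟨_, Q', rfl, ?_, ?_⟩
      · rw [← Polynomial.coeff_map, hQ', hdeg]
        exact fun h => hne (Polynomial.leadingCoeff_eq_zero.mp h)
      · rw [← Polynomial.eval_map, hQ', Polynomial.eval_map, hQ]
    filter_upwards [hmap0 Q hm] with k hk
    rw [← Polynomial.eval_map, hk, Polynomial.eval_zero]

theorem aeval_cons_aux {K A : Type} [Field K] [CommRing A] [Algebra K A] (n : ℕ)
    (y : A) (x : Fin n → A) (Q : MvPolynomial (Fin (n+1)) K) :
    MvPolynomial.aeval (Fin.cons y x : Fin (n+1) → A) Q =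
      (MvPolynomial.finSuccEquiv K n Q).eval₂
        (MvPolynomial.aeval x : MvPolynomial (Fin n) K →ₐ[K] A).toRingHom y := by
  induction Q using MvPolynomial.induction_on with
  | C a => simp [MvPolynomial.finSuccEquiv_apply]
  | add p q hp hq => rw [map_add, map_add, Polynomial.eval₂_add, hp, hq]
  | mul_X p i hp =>
    rw [map_mul, map_mul, Polynomial.eval₂_mul, hp]
    congr 1
    refine Fin.cases ?_ (fun j => ?_) i
    · simp [MvPolynomial.finSuccEquiv_X_zero]
    · simp [MvPolynomial.finSuccEquiv_X_succ]

open Filter Topology in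
theorem seq_aux {K : Type} [Field K] [IsAlgClosed K] [Algebra K ℂ]
    (hd : DenseRange (algebraMap K ℂ)) (n : ℕ) (p : Fin n → ℂ) :
    ∃ x : ℕ → Fin n → K, (∀ i, Tendsto (fun k => algebraMap K ℂ (x k i)) atTop (𝓝 (p i))) ∧
      ∀ Q : MvPolynomial (Fin n) K, MvPolynomial.aeval p Q = 0 →
        ∀ᶠ k in atTop, MvPolynomial.aeval (x k) Q = 0 := by
  induction n with
  | zero =>
    refine ⟨fun _ => Fin.elim0, fun i => i.elim0, fun Q hQ => Eventually.of_forall fun k => ?_⟩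
    rw [MvPolynomial.eq_C_of_isEmpty Q] at hQ ⊢
    simpa using hQ
  | succ n ih =>
    obtain ⟨x, hx, hx0⟩ := ih (Fin.tail p)
    have h1 : ∀ r : MvPolynomial (Fin n) K, Tendsto
        (fun k => algebraMap K ℂ ((MvPolynomial.aeval (x k) :
          MvPolynomial (Fin n) K →ₐ[K] K).toRingHom r)) atTop
        (𝓝 ((MvPolynomial.aeval (Fin.tail p) : MvPolynomial (Fin n) K →ₐ[K] ℂ).toRingHom r)) := by
      intro r
      induction r using MvPolynomial.induction_on with
      | C a => simp
      | add p q hp hq => simp only [map_add]; exact hp.add hq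
      | mul_X p i hp =>
        simp only [map_mul]
        refine hp.mul ?_
        simpa using hx i
    obtain ⟨y, hy, hy0⟩ := step_aux hd
      (MvPolynomial.aeval (Fin.tail p) : MvPolynomial (Fin n) K →ₐ[K] ℂ).toRingHom
      (fun k => (MvPolynomial.aeval (x k) : MvPolynomial (Fin n) K →ₐ[K] K).toRingHom)
      h1 hx0 (p 0)
    refine ⟨fun k => Fin.cons (y k) (x k), fun i => ?_, fun Q hQ => ?_⟩
    · refine Fin.cases ?_ (fun j => ?_) i
      · simpa using hy
      · simpa [Fin.tail] using hx j
    · rw [← Fin.cons_self_tail p, aeval_cons_aux] at hQ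
      filter_upwards [hy0 _ hQ] with k hk
      rw [aeval_cons_aux]
      exact hk

theorem dense_aux : DenseRange (algebraMap (algebraicClosure ℚ ℂ) ℂ) := by
  have hI : IsAlgebraic ℚ Complex.I := by
    refine ⟨Polynomial.X ^ 2 + 1, ?_, by simp⟩
    exact (Polynomial.monic_X_pow_add_C (1:ℚ) two_ne_zero).ne_zero
  intro z
  rw [Metric.mem_closure_iff]
  intro ε hε
  obtain ⟨a, ha1, ha2⟩ := exists_rat_btwn (show z.re < z.re + ε / 2 by linarith)
  obtain ⟨b, hb1, hb2⟩ := exists_rat_btwn (show z.im < z.im + ε / 2 by linarith)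
  have halg : IsAlgebraic ℚ ((a : ℂ) + b * Complex.I) :=
    (isAlgebraic_algebraMap (A := ℂ) a).add ((isAlgebraic_algebraMap (A := ℂ) b).mul hI)
  refine ⟨(a : ℂ) + b * Complex.I, ⟨⟨_, (mem_algebraicClosure_iff).2 halg⟩, rfl⟩, ?_⟩
  rw [dist_eq_norm]
  refine (Complex.norm_le_abs_re_add_abs_im _).trans_lt ?_
  have e1 : |(z - ((a : ℂ) + b * Complex.I)).re| < ε / 2 := by
    simp only [Complex.sub_re, Complex.add_re, Complex.mul_re, Complex.ratCast_re,
      Complex.ratCast_im, Complex.I_re, Complex.I_im]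
    rw [abs_lt]; constructor <;> linarith
  have e2 : |(z - ((a : ℂ) + b * Complex.I)).im| < ε / 2 := by
    simp only [Complex.sub_im, Complex.add_im, Complex.mul_im, Complex.ratCast_re,
      Complex.ratCast_im, Complex.I_re, Complex.I_im]
    rw [abs_lt]; constructor <;> linarith
  linarith

/-- If `Z ⊆ ℂⁿ` is the set of common zeros of a family of polynomials with algebraic
coefficients, then the points of `Z` all of whose coordinates are algebraic numbers are
dense in `Z` for the Euclidean topology. -/
theorem algebraic_points_dense_in_zero_locus
    (n : ℕ) (hn : 1 ≤ n) (S : Set (MvPolynomial (Fin n) ℂ))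
    (hS : ∀ P ∈ S, ∀ m, IsAlgebraic ℚ (MvPolynomial.coeff m P)) :
    ∀ p ∈ {x : Fin n → ℂ | ∀ P ∈ S, MvPolynomial.eval x P = 0},
      p ∈ closure {x : Fin n → ℂ |
        (∀ P ∈ S, MvPolynomial.eval x P = 0) ∧ ∀ i, IsAlgebraic ℚ (x i)} := by
  intro p hp
  have : IsAlgClosed (algebraicClosure ℚ ℂ) := (algebraicClosure.isAlgClosure ℚ ℂ).isAlgClosed
  obtain ⟨x, hx, hx0⟩ := seq_aux (K := algebraicClosure ℚ ℂ) dense_aux n p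
  have hfg : (RingHom.ker (MvPolynomial.aeval p :
      MvPolynomial (Fin n) (algebraicClosure ℚ ℂ) →ₐ[algebraicClosure ℚ ℂ] ℂ)).FG :=
    IsNoetherian.noetherian _
  obtain ⟨T, hT⟩ := hfg
  have hev : ∀ᶠ k in Filter.atTop, ∀ Q ∈ T, MvPolynomial.aeval (x k) Q = 0 := by
    rw [Filter.eventually_all_finset]
    intro Q hQ
    apply hx0
    have : Q ∈ Ideal.span (T : Set (MvPolynomial (Fin n) (algebraicClosure ℚ ℂ))) :=
      Ideal.subset_span hQ
    have h2 := hT.le this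
    exact h2
  refine mem_closure_of_tendsto (b := Filter.atTop)
    (f := fun k i => algebraMap (algebraicClosure ℚ ℂ) ℂ (x k i)) (tendsto_pi_nhds.2 hx) ?_
  filter_upwards [hev] with k hk
  refine ⟨fun P hP => ?_, fun i => mem_algebraicClosure_iff.1 (x k i).2⟩
  have hmem : P ∈ Set.range (MvPolynomial.map (σ := Fin n) (algebraMap (algebraicClosure ℚ ℂ) ℂ)) := by
    rw [MvPolynomial.mem_range_map_iff_coeffs_subset]
    intro c hc
    rw [Finset.mem_coe, MvPolynomial.mem_coeffs_iff] at hc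
    obtain ⟨m, _, rfl⟩ := hc
    exact ⟨⟨_, mem_algebraicClosure_iff.2 (hS P hP m)⟩, rfl⟩
  obtain ⟨Q, rfl⟩ := hmem
  have hQp : MvPolynomial.aeval p Q = 0 := by
    have := hp _ hP
    rwa [MvPolynomial.eval_map] at this
  have hle : Ideal.span (T : Set (MvPolynomial (Fin n) (algebraicClosure ℚ ℂ))) ≤
      RingHom.ker (MvPolynomial.aeval (x k) : MvPolynomial (Fin n) (algebraicClosure ℚ ℂ)
        →ₐ[algebraicClosure ℚ ℂ] (algebraicClosure ℚ ℂ)) :=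
    Ideal.span_le.2 fun q hq => hk q hq
  have hQ0 : MvPolynomial.aeval (x k) Q = 0 := hle (hT.ge hQp)
  rw [MvPolynomial.eval_map]
  have := MvPolynomial.aeval_algebraMap_apply ℂ (x k) Q
  rw [hQ0, map_zero] at this
  exact this
end

section
/- Let n ≥ 1, let Z ⊆ (ℂˣ)ⁿ be the set of common zeros, lying in (ℂˣ)ⁿ, of a family of polynomials in n variables all of whose coefficients are algebraic numbers, and let χ : (ℂˣ)ⁿ → ℂˣ be the character given by χ(x₁,…,xₙ) = x₁^{a₁}⋯xₙ^{aₙ} for some integers a₁,…,aₙ. If there exists a point p ∈ Z such that χ(p) is not an algebraic number, then the image χ(Z) is an open subset of ℂˣ in the Euclidean topology. -/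
/-- A nontrivial finite type algebra over a field maps to any algebraically closed extension. -/
theorem exists_algHom_of_finiteType_field {k C Ω : Type*} [Field k] [CommRing C] [Nontrivial C]
    [Field Ω] [IsAlgClosed Ω] [Algebra k C] [Algebra k Ω] [Algebra.FiniteType k C] :
    Nonempty (C →ₐ[k] Ω) := by
  obtain ⟨m, hm⟩ := Ideal.exists_maximal C
  let := Ideal.Quotient.field m
  have hfin := finite_of_finite_type_of_isJacobsonRing k (C ⧸ m)
  let φ : (C ⧸ m) →ₐ[k] Ω := IsAlgClosed.lift
  exact ⟨φ.comp (Ideal.Quotient.mkₐ _ m)⟩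

open TensorProduct in
/-- Extension of a map to an algebraically closed field along a finite type algebra
whose fibre over the kernel is nonempty. -/
theorem exists_algHom_of_ker_mem_range {R B Ω : Type*} [CommRing R] [CommRing B] [Field Ω]
    [IsAlgClosed Ω] [Algebra R B] [Algebra R Ω] [Algebra.FiniteType R B]
    (q : PrimeSpectrum R) (hq : q.asIdeal = RingHom.ker (algebraMap R Ω))
    (h : q ∈ Set.range (PrimeSpectrum.comap (algebraMap R B))) :
    Nonempty (B →ₐ[R] Ω) := by
  have hnt := (PrimeSpectrum.nontrivial_iff_mem_rangeComap q).mpr h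
  let g : q.asIdeal.ResidueField →ₐ[R] Ω :=
    Ideal.ResidueField.liftₐ q.asIdeal (Algebra.ofId R Ω) (le_of_eq hq) (by
      intro x hx
      have hx' : x ∉ q.asIdeal := hx
      rw [hq, RingHom.mem_ker] at hx'
      exact isUnit_iff_ne_zero.mpr hx')
  let := g.toRingHom.toAlgebra
  have : IsScalarTower R q.asIdeal.ResidueField Ω := .of_algebraMap_eq fun x => (g.commutes x).symm
  obtain ⟨φ⟩ := exists_algHom_of_finiteType_field (k := q.asIdeal.ResidueField)
    (C := q.asIdeal.ResidueField ⊗[R] B) (Ω := Ω)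
  exact ⟨(φ.restrictScalars R).comp Algebra.TensorProduct.includeRight⟩

open Polynomial in
/-- If `t` is transcendental in a finite type domain, almost all values of `t` are attained. -/
theorem exists_algHom_apply_eq {K B Ω : Type*} [Field K] [CommRing B] [IsDomain B] [Field Ω]
    [IsAlgClosed Ω] [Algebra K B] [Algebra K Ω] [Algebra.FiniteType K B]
    (t : B) (ht : Transcendental K t) :
    ∃ f : K[X], f ≠ 0 ∧ ∀ c : Ω, aeval c f ≠ 0 → ∃ φ : B →ₐ[K] Ω, φ t = c := by
  let : Algebra K[X] B := (aeval t : K[X] →ₐ[K] B).toRingHom.toAlgebra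
  have hB : ∀ x : K[X], algebraMap K[X] B x = aeval t x := fun _ => rfl
  have : IsScalarTower K K[X] B := .of_algebraMap_eq fun x => by simp [hB]
  have : Algebra.FiniteType K[X] B := .of_restrictScalars_finiteType K K[X] B
  have hfp : (algebraMap K[X] B).FinitePresentation := by
    rw [RingHom.finitePresentation_algebraMap]
    exact Algebra.FinitePresentation.of_finiteType.mp inferInstance
  obtain ⟨D, hD⟩ := PrimeSpectrum.exists_constructibleSetData_iff.mpr
    (PrimeSpectrum.isConstructible_range_comap hfp)
  have hinj : Function.Injective (algebraMap K[X] B) := transcendental_iff_injective.mp ht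
  have hbot : (⊥ : PrimeSpectrum K[X]) ∈ D.toSet := by
    rw [hD]
    refine ⟨⊥, ?_⟩
    ext x
    simpa using map_eq_zero_iff _ hinj
  simp only [PrimeSpectrum.ConstructibleSetData.toSet, Set.mem_iUnion] at hbot
  obtain ⟨C, hC, hbC⟩ := hbot
  have hg : ∀ i, C.g i = 0 := by
    intro i
    have := hbC.1 (Set.mem_range_self i)
    simpa using this
  have hf : C.f ≠ 0 := by
    intro h
    apply hbC.2
    simp [h]
  refine ⟨C.f, hf, fun c hc => ?_⟩
  let : Algebra K[X] Ω := (aeval c : K[X] →ₐ[K] Ω).toRingHom.toAlgebra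
  have hΩ : ∀ x : K[X], algebraMap K[X] Ω x = aeval c x := fun _ => rfl
  have : IsScalarTower K K[X] Ω := .of_algebraMap_eq fun x => by simp [hΩ]
  let q : PrimeSpectrum K[X] := ⟨RingHom.ker (algebraMap K[X] Ω), RingHom.ker_isPrime _⟩
  have hq : q ∈ Set.range (PrimeSpectrum.comap (algebraMap K[X] B)) := by
    rw [← hD]
    refine Set.mem_biUnion hC ⟨?_, ?_⟩
    · rintro _ ⟨i, rfl⟩
      rw [hg i]
      exact q.asIdeal.zero_mem
    · intro h
      exact hc (h rfl)
  obtain ⟨φ⟩ := exists_algHom_of_ker_mem_range (Ω := Ω) (B := B) q rfl hq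
  refine ⟨φ.restrictScalars K, ?_⟩
  have := φ.commutes X
  rw [hB, hΩ, aeval_X, aeval_X] at this
  exact this

/-- Let `Z ⊆ (ℂˣ)ⁿ` be the set of common zeros (lying in `(ℂˣ)ⁿ`) of a family of
polynomials with algebraic coefficients, and let `χ : (ℂˣ)ⁿ → ℂˣ` be the character
`χ(x) = x₁^{a₁} ⋯ xₙ^{aₙ}`.  If `χ` takes a non-algebraic value at some point of `Z`,
then `χ(Z)` is open in `ℂˣ`. -/
theorem character_image_isOpen_of_transcendental_value
    (n : ℕ) (hn : 1 ≤ n) (S : Set (MvPolynomial (Fin n) ℂ))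
    (hS : ∀ P ∈ S, ∀ m, IsAlgebraic ℚ (MvPolynomial.coeff m P))
    (Z : Set (Fin n → ℂˣ))
    (hZ : Z = {x : Fin n → ℂˣ | ∀ P ∈ S, MvPolynomial.eval (fun i => (x i : ℂ)) P = 0})
    (a : Fin n → ℤ)
    (hp : ∃ p ∈ Z, ¬ IsAlgebraic ℚ ((∏ i, (p i) ^ (a i) : ℂˣ) : ℂ)) :
    IsOpen ((fun x : Fin n → ℂˣ => ∏ i, (x i) ^ (a i)) '' Z) := by
  obtain ⟨p, hpZ, hpt⟩ := hp
  subst hZ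
  let K := algebraicClosure ℚ ℂ
  let s : Set ℂ := Set.range (fun i => (p i : ℂ)) ∪ Set.range (fun i => ((p i)⁻¹ : ℂ))
  have hsfin : s.Finite := (Set.finite_range _).union (Set.finite_range _)
  let B : Subalgebra K ℂ := Algebra.adjoin K s
  have : Algebra.FiniteType K B :=
    B.fg_iff_finiteType.mp (Subalgebra.fg_def.mpr ⟨s, hsfin, rfl⟩)
  have h1 : ∀ i, (p i : ℂ) ∈ B := fun i => Algebra.subset_adjoin (Or.inl ⟨i, rfl⟩)
  have h2 : ∀ i, ((p i)⁻¹ : ℂ) ∈ B := fun i => Algebra.subset_adjoin (Or.inr ⟨i, rfl⟩)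
  let u : Fin n → Bˣ := fun i =>
    ⟨⟨p i, h1 i⟩, ⟨_, h2 i⟩, Subtype.ext (by simp), Subtype.ext (by simp)⟩
  have hu : ∀ i, Units.map (B.val : B →* ℂ) (u i) = p i := fun i => Units.ext rfl
  let t : B := ((∏ i, u i ^ a i : Bˣ) : B)
  have htv : (t : ℂ) = ((∏ i, (p i) ^ (a i) : ℂˣ) : ℂ) := by
    have : Units.map (B.val : B →* ℂ) (∏ i, u i ^ a i) = ∏ i, (p i) ^ (a i) := by
      simp only [map_prod, map_zpow, hu]
    rw [← this]
    rfl
  have ht : Transcendental K t := by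
    intro halg
    apply hpt
    rw [← htv]
    have h3 : IsAlgebraic K (t : ℂ) := halg.algHom B.val
    have : Algebra.IsAlgebraic ℚ K := algebraicClosure.isAlgebraic ℚ ℂ
    exact h3.restrictScalars ℚ
  obtain ⟨f, hf0, hf⟩ := exists_algHom_apply_eq (Ω := ℂ) t ht
  have hfinite : {c : ℂ | Polynomial.aeval c f = 0}.Finite := by
    refine (f.rootSet_finite ℂ).subset fun c hc => ?_
    exact (Polynomial.mem_rootSet.mpr ⟨hf0, hc⟩)
  rw [← isClosed_compl_iff]
  refine Set.Finite.isClosed ((hfinite.preimage (f := ((↑) : ℂˣ → ℂ))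
    Units.val_injective.injOn).subset ?_)
  intro c hc
  by_contra hc0
  apply hc
  obtain ⟨φ, hφ⟩ := hf (c : ℂ) hc0
  refine ⟨fun i => Units.map (φ : B →* ℂ) (u i), ?_, ?_⟩
  · intro P hP
    have hPK : P ∈ Set.range (MvPolynomial.map (σ := Fin n) (algebraMap K ℂ)) := by
      rw [MvPolynomial.mem_range_map_iff_coeffs_subset]
      intro z hz
      obtain ⟨m, -, rfl⟩ := MvPolynomial.mem_coeffs_iff.mp hz
      exact ⟨⟨_, mem_algebraicClosure_iff.mpr (hS P hP m)⟩, rfl⟩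
    obtain ⟨Q, rfl⟩ := hPK
    have hz := hpZ _ hP
    rw [MvPolynomial.eval_map, ← MvPolynomial.aeval_def] at hz ⊢
    have h4 : MvPolynomial.aeval (fun i => (u i : B)) Q = 0 := by
      apply Subtype.val_injective
      have h5 := MvPolynomial.comp_aeval_apply (fun i => (u i : B)) B.val Q
      exact h5.trans hz
    have h6 := MvPolynomial.comp_aeval_apply (fun i => (u i : B)) φ Q
    rw [h4, map_zero] at h6
    exact h6.symm
  · have : Units.map (φ : B →* ℂ) (∏ i, u i ^ a i) = ∏ i, (Units.map (φ : B →* ℂ) (u i)) ^ (a i) := by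
      simp only [map_prod, map_zpow]
    change ∏ i, (Units.map (φ : B →* ℂ) (u i)) ^ (a i) = c
    rw [← this]
    exact Units.ext hφ
end
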